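/- arXiv:0912.0405 — 2 statements merged into one kernel-verified Lean document; each statement's English description precedes it below -/
import Mathlib

section
/- For every m ≥ 4, the Hurwitz orbit of the length 2 braid system (σ_1, σ_2σ_3⋯σ_{m-1}) ∈ B_m^2 has exactly 2m elements. -/
open FreeGroup in
/-- The braid relations on `m` strands (generators indexed 0-based by `Fin (m-1)`). -/
def braidRels (m : ℕ) : Set (FreeGroup (Fin (m - 1))) :=
  {r | ∃ i j : Fin (m - 1), (i.val + 2 ≤ j.val ∨ j.val + 2 ≤ i.val) ∧
        r = of i * of j * (of j * of i)⁻¹} ∪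
  {r | ∃ i j : Fin (m - 1), (i.val + 1 = j.val ∨ j.val + 1 = i.val) ∧
        r = of i * of j * of i * (of j * of i * of j)⁻¹}

/-- The braid group on `m` strands. -/
abbrev BraidGroup (m : ℕ) := PresentedGroup (braidRels m)

/-- The Artin generator `σ_i` (1-based index `1 ≤ i ≤ m-1`); junk value `1` out of range. -/
def braidGen (m : ℕ) (i : ℕ) : BraidGroup m :=
  if h : 1 ≤ i ∧ i ≤ m - 1 then PresentedGroup.of ⟨i - 1, by omega⟩ else 1

/-- A braid is periodic if some positive power of it is central. -/
def IsPeriodic {m : ℕ} (β : BraidGroup m) : Prop :=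
  ∃ k : ℕ, 1 ≤ k ∧ β ^ k ∈ Subgroup.center (BraidGroup m)

/-- The elementary Hurwitz move at (0-based) position `i`, as a bijection on `n`-tuples. -/
def hEquiv {G : Type*} [Group G] {n : ℕ} (i : Fin (n - 1)) : Equiv.Perm (Fin n → G) where
  toFun s := fun k =>
    if k.val = i.val then s ⟨i.val + 1, by have := i.isLt; omega⟩
    else if k.val = i.val + 1 then
      (s ⟨i.val + 1, by have := i.isLt; omega⟩)⁻¹ * s ⟨i.val, by have := i.isLt; omega⟩ *
        s ⟨i.val + 1, by have := i.isLt; omega⟩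
    else s k
  invFun t := fun k =>
    if k.val = i.val then
      t ⟨i.val, by have := i.isLt; omega⟩ * t ⟨i.val + 1, by have := i.isLt; omega⟩ *
        (t ⟨i.val, by have := i.isLt; omega⟩)⁻¹
    else if k.val = i.val + 1 then t ⟨i.val, by have := i.isLt; omega⟩
    else t k
  left_inv s := by
    funext k
    have hlt := i.isLt
    rcases k with ⟨kv, hkv⟩
    by_cases h1 : kv = i.val
    · subst h1
      simp [mul_assoc]
    · by_cases h2 : kv = i.val + 1
      · subst h2
        simp
      · simp [h1, h2]
  right_inv t := by
    funext k
    have hlt := i.isLt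
    rcases k with ⟨kv, hkv⟩
    by_cases h1 : kv = i.val
    · subst h1
      simp [mul_assoc]
    · by_cases h2 : kv = i.val + 1
      · subst h2
        simp [mul_assoc]
      · simp [h1, h2]

/-- The (right) Hurwitz action of a word in the generators `σ_1, …, σ_{n-1}` of `B_n`
on `n`-tuples of elements of a group `G`: `hurwitzAct (w₁ * w₂) s = hurwitzAct w₂ (hurwitzAct w₁ s)`. -/
def hurwitzAct {G : Type*} [Group G] {n : ℕ} (w : FreeGroup (Fin (n - 1))) (s : Fin n → G) :
    Fin n → G :=
  (MulOpposite.unop (FreeGroup.lift (fun i => MulOpposite.op (hEquiv (G := G) (n := n) i)) w)) s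

/-- The Hurwitz orbit of a braid system. -/
def hurwitzOrbit {G : Type*} [Group G] {n : ℕ} (s : Fin n → G) : Set (Fin n → G) :=
  {t | ∃ w : FreeGroup (Fin (n - 1)), hurwitzAct w s = t}

/-- The generator `σ_i` (1-based) as a word acting on length-`n` systems. -/
def genWord (n : ℕ) (i : ℕ) : FreeGroup (Fin (n - 1)) :=
  if h : 1 ≤ i ∧ i ≤ n - 1 then FreeGroup.of ⟨i - 1, by omega⟩ else 1

/-- The pure braid word `c_i = (σ_1⁻¹ ⋯ σ_{i-1}⁻¹) σ_i² (σ_{i-1} ⋯ σ_1)`. -/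
def cWord (n : ℕ) (i : ℕ) : FreeGroup (Fin (n - 1)) :=
  ((List.range (i - 1)).map (fun t => (genWord n (t + 1))⁻¹)).prod *
    genWord n i ^ 2 *
    ((List.range (i - 1)).reverse.map (fun t => genWord n (t + 1))).prod

/-- The word `Δ_{(i,j)} = (σ_i σ_{i+1} ⋯ σ_j)(σ_i ⋯ σ_{j-1}) ⋯ (σ_i σ_{i+1})(σ_i)`. -/
def deltaWord (n i j : ℕ) : FreeGroup (Fin (n - 1)) :=
  ((List.range (j - i + 1)).map (fun t =>
    ((List.range (j - t - i + 1)).map (fun u => genWord n (i + u))).prod)).prod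

/-- The exponent-sum homomorphism, valued in `Multiplicative ℤ`. -/
def expSumHom {m : ℕ} : BraidGroup m →* Multiplicative ℤ :=
  PresentedGroup.toGroup (f := fun _ => Multiplicative.ofAdd 1) (by
    rintro r (⟨i, j, -, rfl⟩ | ⟨i, j, -, rfl⟩) <;>
      simp <;> group)

/-- The exponent sum of a braid: `e(σ_i) = 1`. -/
def esum {m : ℕ} (β : BraidGroup m) : ℤ := Multiplicative.toAdd (expSumHom β)

/-- A braid system is reducible if some non-trivial partition of the index set has all
entries from the two parts commuting. -/
def IsReducible {G : Type*} [Group G] {n : ℕ} (s : Fin n → G) : Prop :=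
  ∃ I : Set (Fin n), I.Nonempty ∧ Iᶜ.Nonempty ∧ ∀ i ∈ I, ∀ j ∈ Iᶜ, Commute (s i) (s j)

/-!
Two Hurwitz moves conjugate the pair `(a, b)` by `(a * b)⁻¹`, while an odd number of moves puts a
conjugate of `b` in the first slot. Hence, if `a` and `b` are not conjugate, the orbit has twice as
many elements as the orbit of `a` under conjugation by `a * b`.

For `(σ₁, σ₂ ⋯ σ_{m-1})` the product is `δ = σ₁ ⋯ σ_{m-1}`, and conjugation by `δ` sends
`σ₁ ↦ σ₂ ↦ ⋯ ↦ σ_{m-1}` and, in two further steps, `σ_{m-1}` back to `σ₁`. Its period on `σ₁`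
therefore divides `m`, and a proper divisor of `m` is excluded because the `σᵢ` are distinct. The
two entries have exponent sums `1` and `m - 2`, so they are not conjugate when `m ≥ 4`.
-/

open ConjAct MulAction

section HurwitzAction

variable {G : Type*} [Group G]

theorem hurwitzOrbit_eq_orbit_closure {n : ℕ} (s : Fin n → G) :
    hurwitzOrbit s = orbit (Subgroup.closure (Set.range (hEquiv (G := G) (n := n)))) s := by
  let act := FreeGroup.lift fun i => MulOpposite.op (hEquiv (G := G) (n := n) i)
  have range_act : act.range.unop = Subgroup.closure (Set.range hEquiv) := by
    rw [FreeGroup.range_lift_eq_closure, Subgroup.unop_closure]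
    congr 1
    ext g
    simp
  rw [← range_act]
  ext t
  constructor
  · rintro ⟨w, rfl⟩
    exact ⟨⟨(act w).unop, w, rfl⟩, rfl⟩
  · rintro ⟨⟨g, w, hw⟩, rfl⟩
    exact ⟨w, congrArg (fun h => h.unop s) hw⟩

theorem hEquiv_smul {M : Type*} [Monoid M] [MulDistribMulAction M G] {n : ℕ} (i : Fin (n - 1))
    (c : M) (s : Fin n → G) : hEquiv i (c • s) = c • hEquiv i s := by
  funext k
  simp only [hEquiv, Equiv.coe_fn_mk, Pi.smul_apply, smul_ite, smul_mul', smul_inv']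

/-- The Hurwitz action of the single generator `σ₁` of `B₂` on pairs. -/
def pairMove (G : Type*) [Group G] : Equiv.Perm (Fin 2 → G) := hEquiv (n := 2) (0 : Fin 1)

theorem pairMove_apply (a b : G) : pairMove G ![a, b] = ![b, b⁻¹ * a * b] := by
  funext k
  fin_cases k <;> simp [pairMove, hEquiv]

theorem ncard_hurwitzOrbit_eq_period_pairMove (s : Fin 2 → G) :
    (hurwitzOrbit s).ncard = period (pairMove G) s := by
  have range_hEquiv : Set.range (hEquiv (G := G) (n := 2)) = {pairMove G} :=
    Set.range_unique (ι := Fin 1)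
  rw [hurwitzOrbit_eq_orbit_closure, range_hEquiv, ← Subgroup.zpowers_eq_closure,
    ← Nat.card_coe_set_eq, Nat.card_congr (orbitZPowersEquiv (pairMove G) s), Nat.card_zmod,
    period_eq_minimalPeriod]

theorem pairMove_pairMove (a b : G) :
    pairMove G (pairMove G ![a, b]) = (toConjAct (a * b))⁻¹ • ![a, b] := by
  rw [pairMove_apply, pairMove_apply, eq_inv_smul_iff]
  funext k
  fin_cases k <;> simp only [Pi.smul_apply, toConjAct_smul] <;> simp [mul_assoc]

theorem pairMove_pow_two_mul (a b : G) (k : ℕ) :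
    (pairMove G ^ (2 * k)) ![a, b] = (toConjAct (a * b) ^ k)⁻¹ • ![a, b] := by
  induction k with
  | zero => simp
  | succ k ih =>
    calc (pairMove G ^ (2 * (k + 1))) ![a, b]
        = pairMove G (pairMove G ((pairMove G ^ (2 * k)) ![a, b])) := by
          rw [mul_add_one, pow_succ', pow_succ', Equiv.Perm.mul_apply, Equiv.Perm.mul_apply]
      _ = (toConjAct (a * b) ^ k)⁻¹ • pairMove G (pairMove G ![a, b]) := by
          rw [ih, pairMove, hEquiv_smul, hEquiv_smul]
      _ = (toConjAct (a * b) ^ (k + 1))⁻¹ • ![a, b] := by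
          rw [pairMove_pairMove, smul_smul, ← mul_inv_rev, ← pow_succ']

theorem pairMove_pow_two_mul_eq_self_iff (a b : G) (k : ℕ) :
    (pairMove G ^ (2 * k)) ![a, b] = ![a, b] ↔ toConjAct (a * b) ^ k • a = a := by
  rw [pairMove_pow_two_mul, inv_smul_eq_iff, eq_comm]
  refine ⟨fun h => congrFun h 0, fun fixes_a => ?_⟩
  have fixes_mul : toConjAct (a * b) ^ k • (a * b) = a * b := by
    rw [← map_pow, toConjAct_smul, ← pow_succ, pow_succ', mul_inv_cancel_right]
  have fixes_b : toConjAct (a * b) ^ k • b = b := by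
    rwa [smul_mul', fixes_a, mul_right_inj] at fixes_mul
  funext j
  fin_cases j
  exacts [fixes_a, fixes_b]

theorem isConj_of_pairMove_pow_eq_self_of_odd {a b : G} {p : ℕ} (hp : Odd p)
    (h : (pairMove G ^ p) ![a, b] = ![a, b]) : IsConj a b := by
  obtain ⟨k, rfl⟩ := hp
  rw [pow_succ', Equiv.Perm.mul_apply, pairMove_pow_two_mul, pairMove, hEquiv_smul, ← pairMove,
    pairMove_apply] at h
  exact mem_orbit_conjAct.1 ⟨_, congrFun h 0⟩

/-- If the orbit is infinite, both sides are `0`. -/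
theorem ncard_hurwitzOrbit_pair {a b : G} (hab : ¬ IsConj a b) :
    (hurwitzOrbit ![a, b]).ncard = 2 * period (toConjAct (a * b)) a := by
  rw [ncard_hurwitzOrbit_eq_period_pairMove]
  apply Nat.dvd_antisymm
  · rw [← pow_smul_eq_iff_period_dvd, Equiv.Perm.smul_def, pairMove_pow_two_mul_eq_self_iff]
    exact pow_period_smul _ _
  · have fixed : (pairMove G ^ period (pairMove G) ![a, b]) ![a, b] = ![a, b] := by
      rw [← Equiv.Perm.smul_def, pow_period_smul]
    have even : Even (period (pairMove G) ![a, b]) :=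
      Nat.not_odd_iff_even.1 fun odd => hab (isConj_of_pairMove_pow_eq_self_of_odd odd fixed)
    obtain ⟨k, hk⟩ := even.two_dvd
    rw [hk, pairMove_pow_two_mul_eq_self_iff, pow_smul_eq_iff_period_dvd] at fixed
    exact hk ▸ mul_dvd_mul_left 2 fixed

end HurwitzAction

section BraidGroup

variable {m : ℕ}

theorem braidGen_eq_of {i : ℕ} (hi : 1 ≤ i) (him : i < m) :
    braidGen m i = PresentedGroup.of (⟨i - 1, by omega⟩ : Fin (m - 1)) :=
  dif_pos ⟨hi, by omega⟩

theorem braidGen_eq_one {i : ℕ} (hi : ¬ (1 ≤ i ∧ i < m)) : braidGen m i = 1 :=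
  dif_neg (by omega)

theorem commute_braidGen {i j : ℕ} (hij : i + 2 ≤ j) :
    Commute (braidGen m i) (braidGen m j) := by
  by_cases hi : 1 ≤ i ∧ i < m
  · by_cases hj : 1 ≤ j ∧ j < m
    · rw [braidGen_eq_of hi.1 hi.2, braidGen_eq_of hj.1 hj.2]
      exact PresentedGroup.mk_eq_mk_of_mul_inv_mem
        (Or.inl ⟨⟨i - 1, by omega⟩, ⟨j - 1, by omega⟩, Or.inl (by grind), rfl⟩)
    · rw [braidGen_eq_one hj]
      exact Commute.one_right _
  · rw [braidGen_eq_one hi]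
    exact Commute.one_left _

theorem semiconjBy_braidGen_mul_braidGen_succ {i : ℕ} (hi : 1 ≤ i) (him : i + 1 < m) :
    SemiconjBy (braidGen m i * braidGen m (i + 1)) (braidGen m i) (braidGen m (i + 1)) := by
  rw [SemiconjBy, ← mul_assoc, braidGen_eq_of hi (by omega), braidGen_eq_of (by omega) him]
  exact PresentedGroup.mk_eq_mk_of_mul_inv_mem
    (Or.inr ⟨⟨i - 1, by omega⟩, ⟨i + 1 - 1, by omega⟩, Or.inl (by grind), rfl⟩)

/-- The ascending product `σᵢ σᵢ₊₁ ⋯ σᵢ₊ₙ₋₁` of `n` consecutive Artin generators. The index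
`t + i` is written so that the second entry of the braid system is `ascendingProd m 2 (m - 2)` by
definition. -/
def ascendingProd (m i n : ℕ) : BraidGroup m :=
  ((List.range n).map fun t => braidGen m (t + i)).prod

theorem ascendingProd_succ (m i n : ℕ) :
    ascendingProd m i (n + 1) = ascendingProd m i n * braidGen m (n + i) := by
  simp [ascendingProd, List.range_succ]

theorem ascendingProd_succ' (m i n : ℕ) :
    ascendingProd m i (n + 1) = braidGen m i * ascendingProd m (i + 1) n := by
  simp [ascendingProd, List.range_succ_eq_map, Function.comp_def, add_right_comm, add_assoc]

theorem commute_ascendingProd_braidGen {i n j : ℕ} (h : i + n < j) :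
    Commute (ascendingProd m i n) (braidGen m j) := by
  induction n with
  | zero => exact Commute.one_left _
  | succ n ih =>
    rw [ascendingProd_succ]
    exact (ih (by omega)).mul_left (commute_braidGen (by omega))

theorem semiconjBy_ascendingProd_braidGen {i n j : ℕ} (hi : 1 ≤ i) (hij : i ≤ j)
    (hjn : j + 1 < i + n) (hjm : j + 1 < m) :
    SemiconjBy (ascendingProd m i n) (braidGen m j) (braidGen m (j + 1)) := by
  induction n with
  | zero => omega
  | succ n ih =>
    rw [ascendingProd_succ]
    obtain hlt | heq : j + 1 < i + n ∨ j + 1 = i + n := by omega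
    · exact (ih hlt).mul_left (commute_braidGen (by omega)).symm
    · obtain ⟨k, rfl⟩ : ∃ k, n = k + 1 := ⟨n - 1, by omega⟩
      obtain rfl : j = k + i := by omega
      rw [ascendingProd_succ, mul_assoc, add_right_comm k 1 i]
      exact SemiconjBy.mul_left (commute_ascendingProd_braidGen (by omega))
        (semiconjBy_braidGen_mul_braidGen_succ (by omega) hjm)

theorem semiconjBy_ascendingProd_ascendingProd {i n j k : ℕ} (hi : 1 ≤ i) (hij : i ≤ j)
    (hjn : j + k < i + n) (hjm : j + k < m) :
    SemiconjBy (ascendingProd m i n) (ascendingProd m j k) (ascendingProd m (j + 1) k) := by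
  induction k with
  | zero => exact SemiconjBy.one_right _
  | succ k ih =>
    rw [ascendingProd_succ, ascendingProd_succ, ← add_assoc]
    exact (ih (by omega) (by omega)).mul_right
      (semiconjBy_ascendingProd_braidGen hi (by omega) (by omega) (by omega))

/-- The braid `δ = σ₁ σ₂ ⋯ σ_{m-1}`, the Garside element of the dual (Birman–Ko–Lee) structure on
the braid group. -/
def dualGarside (m : ℕ) : BraidGroup m := ascendingProd m 1 (m - 1)

theorem braidGen_one_mul_ascendingProd_two (hm : 2 ≤ m) :
    braidGen m 1 * ascendingProd m 2 (m - 2) = dualGarside m := by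
  obtain ⟨n, rfl⟩ := Nat.exists_eq_add_of_le' hm
  exact (ascendingProd_succ' (n + 2) 1 n).symm

theorem ascendingProd_one_mul_braidGen_last (hm : 2 ≤ m) :
    ascendingProd m 1 (m - 2) * braidGen m (m - 1) = dualGarside m := by
  obtain ⟨n, rfl⟩ := Nat.exists_eq_add_of_le' hm
  exact (ascendingProd_succ (n + 2) 1 n).symm

theorem semiconjBy_dualGarside_pow_braidGen {i k : ℕ} (hi : 1 ≤ i) (hik : i + k < m) :
    SemiconjBy (dualGarside m ^ k) (braidGen m i) (braidGen m (i + k)) := by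
  induction k with
  | zero => simp
  | succ k ih =>
    rw [pow_succ']
    have shift : SemiconjBy (dualGarside m) (braidGen m (i + k)) (braidGen m (i + k + 1)) :=
      semiconjBy_ascendingProd_braidGen le_rfl (by omega) (by omega) (by omega)
    exact shift.mul_left (ih (by omega))

theorem semiconjBy_dualGarside_sq_braidGen_last (hm : 2 ≤ m) :
    SemiconjBy (dualGarside m ^ 2) (braidGen m (m - 1)) (braidGen m 1) := by
  have shift : SemiconjBy (dualGarside m) (ascendingProd m 1 (m - 2)) (ascendingProd m 2 (m - 2)) :=
    semiconjBy_ascendingProd_ascendingProd le_rfl le_rfl (by omega) (by omega)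
  calc dualGarside m ^ 2 * braidGen m (m - 1)
      = braidGen m 1 * (ascendingProd m 2 (m - 2) * dualGarside m) * braidGen m (m - 1) := by
        rw [sq, ← mul_assoc (braidGen m 1), braidGen_one_mul_ascendingProd_two hm]
    _ = braidGen m 1 * (dualGarside m * (ascendingProd m 1 (m - 2) * braidGen m (m - 1))) := by
        rw [← shift.eq]
        simp only [mul_assoc]
    _ = braidGen m 1 * dualGarside m ^ 2 := by
        rw [ascendingProd_one_mul_braidGen_last hm, sq]

theorem commute_dualGarside_pow_braidGen_one (hm : 2 ≤ m) :
    Commute (dualGarside m ^ m) (braidGen m 1) := by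
  have to_last : SemiconjBy (dualGarside m ^ (m - 2)) (braidGen m 1) (braidGen m (m - 1)) := by
    convert semiconjBy_dualGarside_pow_braidGen (m := m) (k := m - 2) le_rfl (by omega) using 2
    omega
  have cycle := (semiconjBy_dualGarside_sq_braidGen_last hm).mul_left to_last
  rwa [← pow_add, Nat.add_sub_of_le hm] at cycle

/-- The permutation representation `σᵢ ↦ (i i+1)` of the braid group. The strands `1, …, m` are
permuted inside `ℕ`, so that no bounds on indices enter. -/
def strandPerm (m : ℕ) : BraidGroup m →* Equiv.Perm ℕ :=
  PresentedGroup.toGroup (f := fun i => Equiv.swap (i.val + 1) (i.val + 2)) (by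
    rintro r (⟨i, j, hij, rfl⟩ | ⟨i, j, hij, rfl⟩) <;>
      simp only [map_mul, map_inv, FreeGroup.lift_apply_of, mul_inv_eq_one]
    · exact (Equiv.Perm.disjoint_swap_swap (by grind)).commute
    · ext x
      grind [Equiv.Perm.mul_apply])

theorem strandPerm_braidGen {i : ℕ} (hi : 1 ≤ i) (him : i < m) :
    strandPerm m (braidGen m i) = Equiv.swap i (i + 1) := by
  obtain ⟨i, rfl⟩ := Nat.exists_eq_add_of_le' hi
  rw [braidGen_eq_of hi him]
  exact PresentedGroup.toGroup.of _

theorem braidGen_injOn (m : ℕ) : Set.InjOn (braidGen m) (Set.Ico 1 m) := by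
  intro i hi j hj hij
  have swap_eq : Equiv.swap i (i + 1) = Equiv.swap j (j + 1) := by
    rw [← strandPerm_braidGen hi.1 hi.2, ← strandPerm_braidGen hj.1 hj.2, hij]
  have := congrArg (· i) swap_eq
  grind

theorem toConjAct_dualGarside_pow_smul_braidGen_one {k : ℕ} (hk : 1 + k < m) :
    toConjAct (dualGarside m) ^ k • braidGen m 1 = braidGen m (1 + k) := by
  rw [← map_pow, toConjAct_smul, (semiconjBy_dualGarside_pow_braidGen le_rfl hk).eq,
    mul_inv_cancel_right]

theorem period_toConjAct_dualGarside_braidGen_one (hm : 3 ≤ m) :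
    period (toConjAct (dualGarside m)) (braidGen m 1) = m := by
  generalize hp : period (toConjAct (dualGarside m)) (braidGen m 1) = p
  have fixed : toConjAct (dualGarside m) ^ p • braidGen m 1 = braidGen m 1 :=
    hp ▸ pow_period_smul _ _
  obtain ⟨q, hq⟩ : p ∣ m := by
    rw [← hp, ← pow_smul_eq_iff_period_dvd, ← map_pow, toConjAct_smul,
      (commute_dualGarside_pow_braidGen_one (by omega)).eq, mul_inv_cancel_right]
  by_contra hne
  -- A proper divisor of `m ≥ 3` is at most `m - 2`, where `δ ^ p` still shifts `σ₁` to `σ_{1+p}`.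
  have hlt : 1 + p < m := by
    have : 2 ≤ q := by
      by_contra!
      interval_cases q <;> omega
    nlinarith
  rw [toConjAct_dualGarside_pow_smul_braidGen_one hlt] at fixed
  have := braidGen_injOn m ⟨by omega, hlt⟩ ⟨le_rfl, by omega⟩ fixed
  obtain rfl : p = 0 := by omega
  omega

theorem esum_braidGen {i : ℕ} (hi : 1 ≤ i) (him : i < m) : esum (braidGen m i) = 1 := by
  rw [braidGen_eq_of hi him]
  exact congrArg Multiplicative.toAdd (PresentedGroup.toGroup.of _)

theorem esum_mul (x y : BraidGroup m) : esum (x * y) = esum x + esum y := by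
  rw [esum, map_mul, toAdd_mul, esum, esum]

theorem esum_eq_of_isConj {x y : BraidGroup m} (h : IsConj x y) : esum x = esum y :=
  congrArg Multiplicative.toAdd (isConj_iff_eq.1 (expSumHom.map_isConj h))

theorem esum_ascendingProd {i n : ℕ} (hi : 1 ≤ i) (him : i + n ≤ m) :
    esum (ascendingProd m i n) = n := by
  induction n with
  | zero => exact congrArg Multiplicative.toAdd (map_one expSumHom)
  | succ n ih =>
    rw [ascendingProd_succ, esum_mul, ih (by omega), esum_braidGen (by omega) (by omega),
      Nat.cast_succ]

theorem not_isConj_braidGen_ascendingProd {i j n : ℕ} (hi : 1 ≤ i) (him : i < m) (hj : 1 ≤ j)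
    (hjm : j + n ≤ m) (hn : n ≠ 1) : ¬ IsConj (braidGen m i) (ascendingProd m j n) := by
  intro h
  have := esum_eq_of_isConj h
  rw [esum_braidGen hi him, esum_ascendingProd hj hjm] at this
  omega

end BraidGroup

/-- For every `m ≥ 4`, the Hurwitz orbit of `(σ_1, σ_2 σ_3 ⋯ σ_{m-1})`
has exactly `2m` elements. -/
theorem hurwitzOrbit_card_eq_two_mul {m : ℕ} (hm : 4 ≤ m) :
    (hurwitzOrbit
      ![braidGen m 1, ((List.range (m - 2)).map (fun t => braidGen m (t + 2))).prod]).ncard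
      = 2 * m := by
  have not_conj : ¬ IsConj (braidGen m 1) (ascendingProd m 2 (m - 2)) :=
    not_isConj_braidGen_ascendingProd le_rfl (by omega) (by omega) (by omega) (by omega)
  calc (hurwitzOrbit ![braidGen m 1, ascendingProd m 2 (m - 2)]).ncard
      = 2 * period (toConjAct (braidGen m 1 * ascendingProd m 2 (m - 2))) (braidGen m 1) :=
        ncard_hurwitzOrbit_pair not_conj
    _ = 2 * m := by
        rw [braidGen_one_mul_ascendingProd_two (by omega),
          period_toConjAct_dualGarside_braidGen_one (by omega)]
end

section
/- Let s = (β_1,…,β_n) ∈ B_m^n be a braid system, let j be an integer with 2 < j ≤ n-1, let k be any integer, and set C = β_1β_2⋯β_{j+1}. Then s·(c_1c_2⋯c_j)^k = (β_1^{C^k}, β_2^{(β_1^{-1}C)^{-k}C^k}, …, β_{j+1}^{(β_1^{-1}C)^{-k}C^k}, β_{j+2}, …, β_n), where x^g denotes g^{-1}xg; that is, the first entry is conjugated by C^k, the entries in positions 2 through j+1 are conjugated by (β_1^{-1}C)^{-k}C^k, and the remaining entries are unchanged. -/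
/-!
In the free group the conjugating factors of consecutive `c_i` cancel, so that
`c_1 ⋯ c_j = (σ_1 ⋯ σ_j)(σ_j ⋯ σ_1)`: the first strand travels past the next `j` strands and comes
back around them. Writing `D = β_2 ⋯ β_{j+1}` and `C = β_1 D`, this word conjugates `β_1` by `C` and
each of `β_2, …, β_{j+1}` by `D⁻¹ C`. Hence it fixes `C` and conjugates `D` by `C`, and
iterating `k` times the conjugators telescope to `C ^ k` and `D ^ (-k) * C ^ k`.
-/

section Action

variable {G : Type*} [Group G] {n : ℕ}

lemma hurwitzAct_one (s : Fin n → G) : hurwitzAct 1 s = s := by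
  simp [hurwitzAct]

lemma hurwitzAct_mul (v w : FreeGroup (Fin (n - 1))) (s : Fin n → G) :
    hurwitzAct (v * w) s = hurwitzAct w (hurwitzAct v s) := by
  simp [hurwitzAct]

lemma hurwitzAct_inv_eq_of_eq {w : FreeGroup (Fin (n - 1))} {s t : Fin n → G}
    (h : hurwitzAct w s = t) : hurwitzAct w⁻¹ t = s := by
  rw [← h, ← hurwitzAct_mul, mul_inv_cancel, hurwitzAct_one]

lemma hurwitzAct_zpow_of_step {w : FreeGroup (Fin (n - 1))} {t : ℤ → Fin n → G}
    (step : ∀ k, hurwitzAct w (t k) = t (k + 1)) (k : ℤ) : hurwitzAct (w ^ k) (t 0) = t k := by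
  induction k with
  | zero => rw [zpow_zero, hurwitzAct_one]
  | succ k ih => rw [zpow_add_one, hurwitzAct_mul, ih, step]
  | pred k ih =>
    rw [zpow_sub_one, hurwitzAct_mul, ih]
    exact hurwitzAct_inv_eq_of_eq (by rw [step, sub_add_cancel])

lemma hurwitzAct_genWord_succ {i : ℕ} (hi : i + 1 < n) (f : ℕ → G) :
    hurwitzAct (genWord n (i + 1)) (fun p : Fin n => f p) =
      fun p : Fin n => if p.val = i then f (i + 1)
        else if p.val = i + 1 then (f (i + 1))⁻¹ * f i * f (i + 1) else f p := by
  have hrange : 1 ≤ i + 1 ∧ i + 1 ≤ n - 1 := by omega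
  simp [hurwitzAct, genWord, hrange, hEquiv]

end Action

section Words

variable (n : ℕ)

/-- The word `σ_1 σ_2 ⋯ σ_j`, which moves the first strand past the next `j` strands. -/
def ascWord (j : ℕ) : FreeGroup (Fin (n - 1)) :=
  ((List.range j).map fun t => genWord n (t + 1)).prod

/-- The word `σ_j ⋯ σ_2 σ_1`, which moves the strand in (1-based) position `j + 1` to the front. It
is spelled as in the right-hand factor of `cWord`. -/
def descWord (j : ℕ) : FreeGroup (Fin (n - 1)) :=
  ((List.range j).reverse.map fun t => genWord n (t + 1)).prod

lemma ascWord_succ (j : ℕ) : ascWord n (j + 1) = ascWord n j * genWord n (j + 1) := by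
  simp [ascWord, List.range_succ]

lemma descWord_succ (j : ℕ) : descWord n (j + 1) = genWord n (j + 1) * descWord n j := by
  simp [descWord, List.range_succ]

lemma inv_descWord (j : ℕ) :
    (descWord n j)⁻¹ = ((List.range j).map fun t => (genWord n (t + 1))⁻¹).prod := by
  simp [descWord, List.prod_inv_reverse, Function.comp_def]

lemma cWord_succ (i : ℕ) :
    cWord n (i + 1) = (descWord n i)⁻¹ * genWord n (i + 1) ^ 2 * descWord n i := by
  rw [inv_descWord]
  rfl

lemma prod_cWord (j : ℕ) :
    ((List.range j).map fun t => cWord n (t + 1)).prod = ascWord n j * descWord n j := by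
  induction j with
  | zero => simp [ascWord, descWord]
  | succ j ih =>
    rw [List.prod_range_succ, ih, cWord_succ, ascWord_succ, descWord_succ]
    simp only [pow_two, mul_assoc, mul_inv_cancel_left]

end Words

section TailProd

variable {G : Type*} [Group G]

/-- The product `f 1 * f 2 * ⋯ * f j`, which omits the first entry `f 0`. -/
def tailProd (f : ℕ → G) (j : ℕ) : G :=
  ((List.range j).map fun t => f (t + 1)).prod

lemma tailProd_zero (f : ℕ → G) : tailProd f 0 = 1 := rfl

lemma tailProd_succ (f : ℕ → G) (j : ℕ) : tailProd f (j + 1) = tailProd f j * f (j + 1) :=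
  List.prod_range_succ _ _

lemma prod_range_succ_eq_mul_tailProd (f : ℕ → G) (j : ℕ) :
    ((List.range (j + 1)).map f).prod = f 0 * tailProd f j :=
  List.prod_range_succ' f j

/-- The tuple `f` with its first entry `f 0` conjugated by `a` and the entries `f 1, …, f j`
conjugated by `b`, where conjugation of `x` by `g` is `g⁻¹ * x * g`. -/
def conjHeadTail (j : ℕ) (a b : G) (f : ℕ → G) (p : ℕ) : G :=
  if p = 0 then a⁻¹ * f p * a else if p ≤ j then b⁻¹ * f p * b else f p

lemma conjHeadTail_one (j : ℕ) (f : ℕ → G) : conjHeadTail j 1 1 f = f := by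
  funext p
  simp [conjHeadTail]

lemma conjHeadTail_conjHeadTail (j : ℕ) (a b a' b' : G) (f : ℕ → G) :
    conjHeadTail j a' b' (conjHeadTail j a b f) = conjHeadTail j (a * a') (b * b') f := by
  funext p
  simp only [conjHeadTail]
  split_ifs <;> group

lemma conjHeadTail_zero (j : ℕ) (a b : G) (f : ℕ → G) :
    conjHeadTail j a b f 0 = a⁻¹ * f 0 * a := rfl

lemma tailProd_conjHeadTail (j : ℕ) (a b : G) (f : ℕ → G) :
    tailProd (conjHeadTail j a b f) j = b⁻¹ * tailProd f j * b := by
  have hconj : ∀ t ∈ List.range j, conjHeadTail j a b f (t + 1) = MulAut.conj b⁻¹ (f (t + 1)) := by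
    intro t ht
    simp [conjHeadTail, Nat.succ_le_of_lt (List.mem_range.mp ht)]
  calc tailProd (conjHeadTail j a b f) j
      = ((List.range j).map fun t => MulAut.conj b⁻¹ (f (t + 1))).prod := by
        rw [tailProd, List.map_congr_left hconj]
    _ = MulAut.conj b⁻¹ (tailProd f j) := by
        rw [tailProd, map_list_prod, List.map_map, Function.comp_def]
    _ = b⁻¹ * tailProd f j * b := by rw [MulAut.conj_apply, inv_inv]

end TailProd

section Formula

variable {G : Type*} [Group G] {n j : ℕ}

lemma hurwitzAct_ascWord (hj : j < n) (f : ℕ → G) :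
    hurwitzAct (ascWord n j) (fun p : Fin n => f p) =
      fun p : Fin n => if p.val < j then f (p + 1)
        else if p.val = j then (tailProd f j)⁻¹ * f 0 * tailProd f j else f p := by
  induction j with
  | zero =>
    funext p
    by_cases hp : p.val = 0 <;> simp [ascWord, hurwitzAct_one, tailProd_zero, hp]
  | succ j ih =>
    rw [ascWord_succ, hurwitzAct_mul, ih (by omega),
      hurwitzAct_genWord_succ hj fun p => if p < j then f (p + 1)
        else if p = j then (tailProd f j)⁻¹ * f 0 * tailProd f j else f p]
    funext p
    have hmul : (tailProd f (j + 1))⁻¹ * f 0 * tailProd f (j + 1) =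
        (f (j + 1))⁻¹ * ((tailProd f j)⁻¹ * f 0 * tailProd f j) * f (j + 1) := by
      rw [tailProd_succ]
      group
    rw [hmul]
    grind

lemma hurwitzAct_descWord (hj : j < n) (f : ℕ → G) :
    hurwitzAct (descWord n j) (fun p : Fin n => f p) =
      fun p : Fin n => if p.val = 0 then f j
        else if p.val ≤ j then (f j)⁻¹ * f (p - 1) * f j else f p := by
  induction j generalizing f with
  | zero =>
    funext p
    by_cases hp : p.val = 0 <;> simp [descWord, hurwitzAct_one, hp]
  | succ j ih =>
    rw [descWord_succ, hurwitzAct_mul, hurwitzAct_genWord_succ hj,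
      ih (by omega) fun p => if p = j then f (j + 1)
        else if p = j + 1 then (f (j + 1))⁻¹ * f j * f (j + 1) else f p]
    funext p
    grind

lemma hurwitzAct_prod_cWord (hj : j < n) (f : ℕ → G) :
    hurwitzAct ((List.range j).map fun t => cWord n (t + 1)).prod (fun p : Fin n => f p) =
      fun p : Fin n =>
        conjHeadTail j (f 0 * tailProd f j) ((tailProd f j)⁻¹ * (f 0 * tailProd f j)) f p := by
  have hhead : (f 0 * tailProd f j)⁻¹ * f 0 * (f 0 * tailProd f j) =
      (tailProd f j)⁻¹ * f 0 * tailProd f j := by group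
  rw [prod_cWord, hurwitzAct_mul, hurwitzAct_ascWord hj,
    hurwitzAct_descWord hj fun p => if p < j then f (p + 1)
      else if p = j then (tailProd f j)⁻¹ * f 0 * tailProd f j else f p]
  funext p
  simp only [conjHeadTail, ← mul_assoc (tailProd f j)⁻¹]
  grind

lemma hurwitzAct_prod_cWord_zpow (hj : j < n) (f : ℕ → G) (k : ℤ) :
    hurwitzAct (((List.range j).map fun t => cWord n (t + 1)).prod ^ k) (fun p : Fin n => f p) =
      fun p : Fin n => conjHeadTail j ((f 0 * tailProd f j) ^ k)
        (tailProd f j ^ (-k) * (f 0 * tailProd f j) ^ k) f p := by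
  set D := tailProd f j with hD
  set C := f 0 * D with hC
  let g (k : ℤ) : ℕ → G := conjHeadTail j (C ^ k) (D ^ (-k) * C ^ k) f
  have tailProd_g (k : ℤ) : tailProd (g k) j = (C ^ k)⁻¹ * D * C ^ k := by
    rw [tailProd_conjHeadTail, ← hD]
    group
  have head_g (k : ℤ) : g k 0 = (C ^ k)⁻¹ * f 0 * C ^ k := conjHeadTail_zero ..
  have head_mul_tailProd_g (k : ℤ) : g k 0 * tailProd (g k) j = C := by
    calc g k 0 * tailProd (g k) j = (C ^ k)⁻¹ * (f 0 * D) * C ^ k := by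
          rw [tailProd_g, head_g]
          group
      _ = C := by
          rw [← hC]
          group
  have g_zero : g 0 = f := by simp [g, conjHeadTail_one]
  have step (k : ℤ) : hurwitzAct ((List.range j).map fun t => cWord n (t + 1)).prod
      (fun p : Fin n => g k p) = fun p : Fin n => g (k + 1) p := by
    have tail_conjugator : D ^ (-k) * C ^ k * (((C ^ k)⁻¹ * D * C ^ k)⁻¹ * C) =
        D ^ (-(k + 1)) * C ^ (k + 1) := by group
    rw [hurwitzAct_prod_cWord hj, head_mul_tailProd_g, tailProd_g, conjHeadTail_conjHeadTail,
      tail_conjugator, ← zpow_add_one]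
  simpa only [g_zero] using hurwitzAct_zpow_of_step (t := fun k (p : Fin n) => g k p) step k

theorem hurwitzAct_cWord_prod_zpow_general (s : Fin n → G) (hj : j < n) (k : ℤ) :
    hurwitzAct (((List.range j).map fun t => cWord n (t + 1)).prod ^ k) s =
      fun p : Fin n =>
        let C : G := ((List.finRange (j + 1)).map fun t => s (Fin.castLE hj t)).prod
        if p.val = 0 then (C ^ k)⁻¹ * s p * C ^ k
        else if p.val ≤ j then
          (((s ⟨0, by omega⟩)⁻¹ * C) ^ (-k) * C ^ k)⁻¹ * s p *
            (((s ⟨0, by omega⟩)⁻¹ * C) ^ (-k) * C ^ k)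
        else s p := by
  obtain ⟨f, rfl⟩ : ∃ f : ℕ → G, s = fun p : Fin n => f p :=
    ⟨Function.extend Fin.val s 1, funext fun p => (Fin.val_injective.extend_apply s 1 p).symm⟩
  have hC : ((List.finRange (j + 1)).map fun t => f (Fin.castLE hj t)).prod =
      f 0 * tailProd f j := by
    rw [← prod_range_succ_eq_mul_tailProd, ← List.map_coe_finRange_eq_range, List.map_map]
    rfl
  rw [hurwitzAct_prod_cWord_zpow hj]
  simp only [hC, inv_mul_cancel_left, conjHeadTail]

end Formula

/-- The formula for the Hurwitz action of `(c_1 c_2 ⋯ c_j)^k` on a braid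
system, for `2 < j ≤ n-1`, where `C = β_1 β_2 ⋯ β_{j+1}`
(entries written 0-based: `β_p = s ⟨p-1⟩`). -/
theorem hurwitzAct_cWord_prod_zpow {m n : ℕ} (s : Fin n → BraidGroup m) (j : ℕ)
    (h1 : 2 < j) (h2 : j ≤ n - 1) (k : ℤ) :
    hurwitzAct ((((List.range j).map (fun t => cWord n (t + 1))).prod) ^ k) s =
      fun p : Fin n =>
        let C : BraidGroup m :=
          ((List.finRange (j + 1)).map (fun t => s (Fin.castLE (by omega) t))).prod
        if p.val = 0 then (C ^ k)⁻¹ * s p * C ^ k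
        else if p.val ≤ j then
          (((s ⟨0, by omega⟩)⁻¹ * C) ^ (-k) * C ^ k)⁻¹ * s p *
            (((s ⟨0, by omega⟩)⁻¹ * C) ^ (-k) * C ^ k)
        else s p := by
  exact hurwitzAct_cWord_prod_zpow_general s (by omega) k
end
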